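/- arXiv:math/0303237 — 4 statements merged into one kernel-verified Lean document; each statement's English description precedes it below -/
import Mathlib

section
/- Assume in addition that E carries a second norm ‖·‖_w and that there are constants σ > 0 and B ≥ 0 such that ‖L_t f‖_w ≤ ‖f‖_w and ‖L_t f‖ ≤ 3 e^{−σ t} ‖f‖ + B ‖f‖_w for all t ≥ 0 and f ∈ E. Then for every z ∈ ℂ with Re z = a > 0, every integer n ≥ 1 and every f ∈ E one has ‖R(z)^n f‖ ≤ 3 (a+σ)^{−n} ‖f‖ + a^{−n} B ‖f‖_w. -/
open MeasureTheory

/-!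
If `‖L_t f‖` is bounded by a sum of exponentials `∑ C_i e^{-σ_i t}`, then the identity
`L_t R(z) f = ∫_0^∞ e^{-z s} L_{t+s} f ds` bounds `‖L_t R(z) f‖` by a sum of the same exponentials,
with `C_i` replaced by `C_i / (Re z + σ_i)`. Orbit bounds of this kind can therefore be iterated,
and `t = 0` gives the bound on `R(z)^n f`. The Lasota–Yorke inequality is an orbit bound with the
two rates `σ` and `0`.
-/

open Set

theorem integrableOn_exp_neg_mul_Ici {a : ℝ} (ha : 0 < a) :
    IntegrableOn (fun t : ℝ ↦ Real.exp (-a * t)) (Ici 0) :=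
  (integrableOn_Ici_iff_integrableOn_Ioi (b := 0)).mpr (exp_neg_integrableOn_Ioi 0 ha)

theorem integral_exp_neg_mul_Ici {a : ℝ} (ha : 0 < a) :
    ∫ t in Ici (0 : ℝ), Real.exp (-a * t) = a⁻¹ := by
  rw [integral_Ici_eq_integral_Ioi, integral_exp_mul_Ioi (neg_lt_zero.mpr ha) 0, mul_zero,
    Real.exp_zero, neg_div_neg_eq, one_div]

section Laplace

variable {E ι : Type*} [NormedAddCommGroup E] [NormedSpace ℂ E]
  {u : ℝ → E} {z : ℂ} {s : Finset ι} {C σ : ι → ℝ}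

theorem norm_cexp_neg_mul_smul (z : ℂ) (t : ℝ) (x : E) :
    ‖Complex.exp (-z * t) • x‖ = Real.exp (-z.re * t) * ‖x‖ := by
  rw [norm_smul, Complex.norm_exp, Complex.re_mul_ofReal, Complex.neg_re]

theorem norm_cexp_neg_mul_smul_le_sum {t : ℝ} {x : E}
    (hx : ‖x‖ ≤ ∑ i ∈ s, C i * Real.exp (-σ i * t)) :
    ‖Complex.exp (-z * t) • x‖ ≤ ∑ i ∈ s, C i * Real.exp (-(z.re + σ i) * t) := by
  calc ‖Complex.exp (-z * t) • x‖
      = Real.exp (-z.re * t) * ‖x‖ := norm_cexp_neg_mul_smul z t x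
    _ ≤ Real.exp (-z.re * t) * ∑ i ∈ s, C i * Real.exp (-σ i * t) := by gcongr
    _ = ∑ i ∈ s, C i * Real.exp (-(z.re + σ i) * t) := by
      rw [Finset.mul_sum]
      refine Finset.sum_congr rfl fun i _ ↦ ?_
      rw [mul_left_comm, ← Real.exp_add, neg_add, add_mul]

theorem integrableOn_sum_mul_exp_neg_mul_Ici {a : ι → ℝ} (ha : ∀ i ∈ s, 0 < a i) :
    IntegrableOn (fun t : ℝ ↦ ∑ i ∈ s, C i * Real.exp (-a i * t)) (Ici 0) :=
  integrable_finsetSum _ fun i hi ↦ (integrableOn_exp_neg_mul_Ici (ha i hi)).const_mul (C i)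

theorem integrableOn_cexp_neg_mul_smul (hu : ContinuousOn u (Ici 0))
    (hσ : ∀ i ∈ s, 0 < z.re + σ i)
    (hbound : ∀ t, 0 ≤ t → ‖u t‖ ≤ ∑ i ∈ s, C i * Real.exp (-σ i * t)) :
    IntegrableOn (fun t : ℝ ↦ Complex.exp (-z * t) • u t) (Ici 0) := by
  refine (integrableOn_sum_mul_exp_neg_mul_Ici (C := C) hσ).mono' ?_ ?_
  · have hexp : Continuous fun t : ℝ ↦ Complex.exp (-z * t) := by fun_prop
    exact (hexp.continuousOn.smul hu).aestronglyMeasurable measurableSet_Ici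
  · filter_upwards [ae_restrict_mem measurableSet_Ici] with t ht
    exact norm_cexp_neg_mul_smul_le_sum (hbound t ht)

theorem norm_integral_cexp_neg_mul_smul_le (hσ : ∀ i ∈ s, 0 < z.re + σ i)
    (hbound : ∀ t, 0 ≤ t → ‖u t‖ ≤ ∑ i ∈ s, C i * Real.exp (-σ i * t)) :
    ‖∫ t in Ici (0 : ℝ), Complex.exp (-z * t) • u t‖ ≤ ∑ i ∈ s, C i * (z.re + σ i)⁻¹ := by
  calc ‖∫ t in Ici (0 : ℝ), Complex.exp (-z * t) • u t‖
      ≤ ∫ t in Ici (0 : ℝ), ∑ i ∈ s, C i * Real.exp (-(z.re + σ i) * t) := by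
        refine norm_integral_le_of_norm_le (integrableOn_sum_mul_exp_neg_mul_Ici hσ) ?_
        filter_upwards [ae_restrict_mem measurableSet_Ici] with t ht
        exact norm_cexp_neg_mul_smul_le_sum (hbound t ht)
    _ = ∑ i ∈ s, ∫ t in Ici (0 : ℝ), C i * Real.exp (-(z.re + σ i) * t) :=
        integral_finsetSum _ fun i hi ↦
          (integrableOn_exp_neg_mul_Ici (hσ i hi)).const_mul (C i)
    _ = ∑ i ∈ s, C i * (z.re + σ i)⁻¹ :=
        Finset.sum_congr rfl fun i hi ↦ by
          rw [integral_const_mul, integral_exp_neg_mul_Ici (hσ i hi)]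

end Laplace

section Resolvent

variable {E ι : Type*} [NormedAddCommGroup E] [NormedSpace ℂ E]
  {L : ℝ → E →L[ℂ] E} {z : ℂ} {f : E} {s : Finset ι} {C σ : ι → ℝ}

/-- The resolvent `R(z)` of a one-parameter semigroup `L`, as the Laplace transform of its orbits.
Only the values `L t` with `0 ≤ t` matter, and the value at `f` is `0` if the integrand is not
integrable. -/
noncomputable def semigroupResolvent (L : ℝ → E →L[ℂ] E) (z : ℂ) (f : E) : E :=
  ∫ t in Ici (0 : ℝ), Complex.exp (-z * t) • L t f

variable [CompleteSpace E]

theorem apply_semigroupResolvent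
    (hLadd : ∀ t r : ℝ, 0 ≤ t → 0 ≤ r → L (t + r) = (L t).comp (L r))
    (hf : IntegrableOn (fun r : ℝ ↦ Complex.exp (-z * r) • L r f) (Ici 0))
    {t : ℝ} (ht : 0 ≤ t) :
    L t (semigroupResolvent L z f) =
      ∫ r in Ici (0 : ℝ), Complex.exp (-z * r) • L (t + r) f := by
  rw [semigroupResolvent, ← ContinuousLinearMap.integral_comp_comm _ hf]
  refine setIntegral_congr_fun measurableSet_Ici fun r hr ↦ ?_
  simp only [map_smul, hLadd t r ht hr, ContinuousLinearMap.comp_apply]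

theorem norm_apply_semigroupResolvent_le
    (hLadd : ∀ t r : ℝ, 0 ≤ t → 0 ≤ r → L (t + r) = (L t).comp (L r))
    (hLcont : ContinuousOn (fun t ↦ L t f) (Ici 0))
    (hσ : ∀ i ∈ s, 0 < z.re + σ i)
    (hf : ∀ t, 0 ≤ t → ‖L t f‖ ≤ ∑ i ∈ s, C i * Real.exp (-σ i * t))
    {t : ℝ} (ht : 0 ≤ t) :
    ‖L t (semigroupResolvent L z f)‖ ≤
      ∑ i ∈ s, C i * (z.re + σ i)⁻¹ * Real.exp (-σ i * t) := by
  have hshift (r : ℝ) (hr : 0 ≤ r) :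
      ‖L (t + r) f‖ ≤ ∑ i ∈ s, C i * Real.exp (-σ i * t) * Real.exp (-σ i * r) := by
    simpa only [mul_add, Real.exp_add, mul_assoc] using hf (t + r) (add_nonneg ht hr)
  rw [apply_semigroupResolvent hLadd (integrableOn_cexp_neg_mul_smul hLcont hσ hf) ht]
  simpa only [mul_right_comm] using norm_integral_cexp_neg_mul_smul_le hσ hshift

theorem norm_apply_iterate_semigroupResolvent_le
    (hLadd : ∀ t r : ℝ, 0 ≤ t → 0 ≤ r → L (t + r) = (L t).comp (L r))
    (hLcont : ∀ g : E, ContinuousOn (fun t ↦ L t g) (Ici 0))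
    (hσ : ∀ i ∈ s, 0 < z.re + σ i)
    (hf : ∀ t, 0 ≤ t → ‖L t f‖ ≤ ∑ i ∈ s, C i * Real.exp (-σ i * t))
    (n : ℕ) {t : ℝ} (ht : 0 ≤ t) :
    ‖L t ((semigroupResolvent L z)^[n] f)‖ ≤
      ∑ i ∈ s, C i * ((z.re + σ i) ^ n)⁻¹ * Real.exp (-σ i * t) := by
  induction n generalizing t with
  | zero => simpa only [Function.iterate_zero_apply, pow_zero, inv_one, mul_one] using hf t ht
  | succ n ih =>
    simpa only [Function.iterate_succ_apply', pow_succ, mul_inv, mul_assoc] using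
      norm_apply_semigroupResolvent_le hLadd (hLcont _) hσ (fun _ ↦ ih) ht

theorem stmt3_general
    (hL0 : L 0 = ContinuousLinearMap.id ℂ E)
    (hLadd : ∀ t r : ℝ, 0 ≤ t → 0 ≤ r → L (t + r) = (L t).comp (L r))
    (hLcont : ∀ g : E, ContinuousOn (fun t ↦ L t g) (Ici 0))
    (hσ : ∀ i ∈ s, 0 < z.re + σ i)
    (hf : ∀ t, 0 ≤ t → ‖L t f‖ ≤ ∑ i ∈ s, C i * Real.exp (-σ i * t)) (n : ℕ) :
    ‖(semigroupResolvent L z)^[n] f‖ ≤ ∑ i ∈ s, C i * ((z.re + σ i) ^ n)⁻¹ := by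
  simpa only [hL0, ContinuousLinearMap.id_apply, mul_zero, Real.exp_zero, mul_one] using
    norm_apply_iterate_semigroupResolvent_le hLadd hLcont hσ hf n le_rfl

end Resolvent

/-- Lemma 2.7, third inequality: if in addition `E` carries a second (weak) norm
`nw` with `nw (L_t f) ≤ nw f` and the Lasota–Yorke inequality
`‖L_t f‖ ≤ 3 e^{-σ t} ‖f‖ + B nw f` holds, then
`‖R(z)^n f‖ ≤ 3 (a+σ)^{-n} ‖f‖ + a^{-n} B nw f` for `a = Re z > 0`. -/
theorem stmt3 {E : Type*} [NormedAddCommGroup E] [NormedSpace ℂ E] [CompleteSpace E]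
    (L : ℝ → E →L[ℂ] E)
    (hL0 : L 0 = ContinuousLinearMap.id ℂ E)
    (hLadd : ∀ t s : ℝ, 0 ≤ t → 0 ≤ s → L (t + s) = (L t).comp (L s))
    (hLcont : ∀ f : E, ContinuousOn (fun t : ℝ => L t f) (Set.Ici 0))
    (hLbdd : ∀ t : ℝ, 0 ≤ t → ∀ f : E, ‖L t f‖ ≤ ‖f‖)
    (nw : E → ℝ)
    (hnw0 : ∀ f : E, 0 ≤ nw f)
    (hnwadd : ∀ f g : E, nw (f + g) ≤ nw f + nw g)
    (hnwsmul : ∀ (c : ℂ) (f : E), nw (c • f) = ‖c‖ * nw f)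
    (σ B : ℝ) (hσ : 0 < σ) (hB : 0 ≤ B)
    (hLw : ∀ t : ℝ, 0 ≤ t → ∀ f : E, nw (L t f) ≤ nw f)
    (hLY : ∀ t : ℝ, 0 ≤ t → ∀ f : E,
      ‖L t f‖ ≤ 3 * Real.exp (-σ * t) * ‖f‖ + B * nw f)
    (z : ℂ) (hz : 0 < z.re)
    (R : E → E)
    (hR : ∀ g : E, R g = ∫ t in Set.Ici (0 : ℝ), Complex.exp (-z * t) • L t g)
    (n : ℕ) (hn : 1 ≤ n) (f : E) :
    ‖R^[n] f‖ ≤ 3 * ((z.re + σ) ^ n)⁻¹ * ‖f‖ + ((z.re) ^ n)⁻¹ * B * nw f := by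
  obtain rfl : R = semigroupResolvent L z := funext hR
  simpa [mul_right_comm, mul_comm, mul_left_comm, mul_assoc] using
    stmt3_general (s := Finset.univ) (C := ![3 * ‖f‖, B * nw f]) (σ := ![σ, 0]) hL0 hLadd hLcont
      (by simp [Fin.forall_fin_two, hz, add_pos hz hσ])
      (fun t ht ↦ by simpa [mul_right_comm] using hLY t ht f) n
end

section
/- Let E be a complex vector space equipped with two norms ‖·‖ and ‖·‖_w, and let (L_t)_{t≥0} be a one-parameter semigroup of linear operators on E (L_0 = Id, L_{t+s} = L_t ∘ L_s) such that ‖L_t f‖_w ≤ ‖f‖_w for all t ≥ 0 and f ∈ E. Suppose there exist T_0 > 0, σ > 0 and K ≥ 0 such that ‖L_t f‖ ≤ 3 e^{−σ t} ‖f‖ + K ‖f‖_w for all t ∈ [0, T_0] and f ∈ E, and moreover ‖L_{T_0} f‖ ≤ e^{−σ T_0} ‖f‖ + K ‖f‖_w for all f ∈ E. Then, with B := 4K (1 − e^{−σ T_0})^{−1}, one has ‖L_t f‖ ≤ 3 e^{−σ t} ‖f‖ + B ‖f‖_w for all t ≥ 0 and all f ∈ E. -/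
/-!
Write `t = n T₀ + r` with `0 ≤ r < T₀`, so that `L t = (L T₀)^n ∘ L r`. Composing two Lasota–Yorke
inequalities multiplies the strong coefficients, and composing `n` contractions after the short-time
bound for `L r` makes the weak constants add up to a partial geometric series
`K (1 + q + ⋯ + q ^ n)`, where `q = exp (-σ T₀) < 1`. Applying the short-time bound first, rather
than after the contractions, gives the weak constant `K (1 - q)⁻¹`, a quarter of the constant `B`.
-/

open Finset Function

/-- The Lasota–Yorke (two-norm) inequality for a map `T` on a space with a strong size function `p`
and a weak one `w`, with strong coefficient `a` and weak coefficient `b`. It is stated for arbitrary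
functions rather than operators and norms, as composing such inequalities only involves the order
and arithmetic of the values. -/
def LasotaYorke {E R : Type*} [Add R] [Mul R] [LE R] (p w : E → R) (T : E → E) (a b : R) : Prop :=
  ∀ f, p (T f) ≤ a * p f + b * w f

namespace LasotaYorke

variable {E R : Type*} [CommSemiring R] [PartialOrder R] [IsOrderedRing R] {p w : E → R}
  {S T : E → E} {a b b' c d q K : R}

theorem mono_weak (hT : LasotaYorke p w T a b) (hw : ∀ f, 0 ≤ w f) (hb : b ≤ b') :
    LasotaYorke p w T a b' := fun f =>
  (hT f).trans (by gcongr; exact hw f)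

theorem comp (hT : LasotaYorke p w T a b) (hS : LasotaYorke p w S c d)
    (hw : ∀ f, w (S f) ≤ w f) (ha : 0 ≤ a) (hb : 0 ≤ b) :
    LasotaYorke p w (T ∘ S) (a * c) (a * d + b) := fun f =>
  calc p (T (S f)) ≤ a * p (S f) + b * w (S f) := hT (S f)
    _ ≤ a * (c * p f + d * w f) + b * w f := by gcongr; exacts [hS f, hw f]
    _ = a * c * p f + (a * d + b) * w f := by ring

theorem iterate (hT : LasotaYorke p w T q K) (hw : ∀ f, w (T f) ≤ w f) (hq : 0 ≤ q) (hK : 0 ≤ K)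
    (n : ℕ) : LasotaYorke p w T^[n] (q ^ n) (K * ∑ k ∈ range n, q ^ k) := by
  induction n with
  | zero => intro f; simp
  | succ n ih =>
    have hcomp := ih.comp hT hw (by positivity) (by positivity)
    rwa [← iterate_succ, ← pow_succ, mul_comm (q ^ n) K, ← mul_add, ← geom_sum_succ'] at hcomp

theorem iterate_comp (hT : LasotaYorke p w T q K) (hS : LasotaYorke p w S c K)
    (hTw : ∀ f, w (T f) ≤ w f) (hSw : ∀ f, w (S f) ≤ w f) (hq : 0 ≤ q) (hK : 0 ≤ K) (n : ℕ) :
    LasotaYorke p w (T^[n] ∘ S) (q ^ n * c) (K * ∑ k ∈ range (n + 1), q ^ k) := by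
  have hcomp := (hT.iterate hTw hq hK n).comp hS hSw (by positivity) (by positivity)
  rwa [mul_comm (q ^ n) K, ← mul_add, ← geom_sum_succ'] at hcomp

end LasotaYorke

theorem geom_sum_le_inv_one_sub {R : Type*} [Field R] [LinearOrder R] [IsStrictOrderedRing R]
    {q : R} (hq : 0 ≤ q) (hq1 : q < 1) (n : ℕ) : ∑ k ∈ range n, q ^ k ≤ (1 - q)⁻¹ := by
  simpa only [range_eq_Ico, pow_zero, one_div] using
    geom_sum_Ico_le_of_lt_one (m := 0) (n := n) hq hq1

theorem exists_nsmul_add_eq_of_nonneg {G : Type*} [AddCommGroup G] [LinearOrder G]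
    [IsOrderedAddMonoid G] [Archimedean G] {T t : G} (hT : 0 < T) (ht : 0 ≤ t) :
    ∃ n : ℕ, ∃ r ∈ Set.Ico 0 T, n • T + r = t := by
  obtain ⟨k, ⟨hk, hk1⟩, -⟩ := existsUnique_zsmul_near_of_pos hT t
  have hk_pos : 0 < k + 1 := (zsmul_lt_zsmul_iff_left hT).1 (by simpa using ht.trans_lt hk1)
  lift k to ℕ using Int.lt_add_one_iff.1 hk_pos
  refine ⟨k, t - k • T, ⟨?_, ?_⟩, add_sub_cancel _ _⟩
  · simpa using hk
  · simpa [add_zsmul, sub_lt_iff_lt_add'] using hk1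

theorem semigroup_nsmul_add_eq_iterate_comp {M E : Type*} [AddMonoid M] [Preorder M]
    [AddLeftMono M] {L : M → E → E}
    (hL : ∀ t s, 0 ≤ t → 0 ≤ s → ∀ f, L (t + s) f = L t (L s f)) {T r : M} (hT : 0 ≤ T)
    (hr : 0 ≤ r) (n : ℕ) : L (n • T + r) = (L T)^[n] ∘ L r := by
  induction n with
  | zero => simp
  | succ n ih =>
    funext f
    rw [succ_nsmul', add_assoc, hL _ _ hT (add_nonneg (nsmul_nonneg hT n) hr), ih,
      iterate_succ', comp_apply, comp_apply, comp_apply]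

theorem stmt4_general {E : Type*} {p w : E → ℝ} (hw : ∀ f, 0 ≤ w f) {L : ℝ → E → E}
    (hL : ∀ t s, 0 ≤ t → 0 ≤ s → ∀ f, L (t + s) f = L t (L s f))
    (hLw : ∀ t, 0 ≤ t → ∀ f, w (L t f) ≤ w f)
    {T₀ σ K M : ℝ} (hT₀ : 0 < T₀) (hσ : 0 < σ) (hK : 0 ≤ K)
    (hshort : ∀ t ∈ Set.Icc 0 T₀, LasotaYorke p w (L t) (M * Real.exp (-σ * t)) K)
    (hcontr : LasotaYorke p w (L T₀) (Real.exp (-σ * T₀)) K) {t : ℝ} (ht : 0 ≤ t) :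
    LasotaYorke p w (L t) (M * Real.exp (-σ * t)) (K * (1 - Real.exp (-σ * T₀))⁻¹) := by
  obtain ⟨n, r, hr, rfl⟩ := exists_nsmul_add_eq_of_nonneg hT₀ ht
  have hq1 : Real.exp (-σ * T₀) < 1 :=
    Real.exp_lt_one_iff.2 (mul_neg_of_neg_of_pos (neg_neg_of_pos hσ) hT₀)
  have hcoeff : M * Real.exp (-σ * (n • T₀ + r)) =
      Real.exp (-σ * T₀) ^ n * (M * Real.exp (-σ * r)) := by
    rw [mul_add, mul_smul_comm, nsmul_eq_mul, Real.exp_add, Real.exp_nat_mul, mul_left_comm]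
  rw [hcoeff, semigroup_nsmul_add_eq_iterate_comp hL hT₀.le hr.1]
  refine (hcontr.iterate_comp (hshort r (Set.Ico_subset_Icc_self hr)) (hLw T₀ hT₀.le) (hLw r hr.1)
    (Real.exp_nonneg _) hK n).mono_weak hw ?_
  gcongr
  exact geom_sum_le_inv_one_sub (Real.exp_nonneg _) hq1 _

/-- The iteration step (equations (3.4)–(3.5)) in the proof of Lemma 2.5: a
short-time two-norm Lasota–Yorke inequality together with a strict contraction
at a single time `T₀` upgrades to a uniform-in-time Lasota–Yorke inequality,
with `B = 4K (1 - e^{-σ T₀})⁻¹`. -/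
theorem stmt4 {E : Type*} [AddCommGroup E] [Module ℂ E]
    (nn nw : E → ℝ)
    (hnn0 : ∀ f : E, 0 ≤ nn f)
    (hnnadd : ∀ f g : E, nn (f + g) ≤ nn f + nn g)
    (hnnsmul : ∀ (c : ℂ) (f : E), nn (c • f) = ‖c‖ * nn f)
    (hnw0 : ∀ f : E, 0 ≤ nw f)
    (hnwadd : ∀ f g : E, nw (f + g) ≤ nw f + nw g)
    (hnwsmul : ∀ (c : ℂ) (f : E), nw (c • f) = ‖c‖ * nw f)
    (L : ℝ → E →ₗ[ℂ] E)
    (hL0 : L 0 = LinearMap.id)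
    (hLadd : ∀ t s : ℝ, 0 ≤ t → 0 ≤ s → ∀ f : E, L (t + s) f = L t (L s f))
    (hLw : ∀ t : ℝ, 0 ≤ t → ∀ f : E, nw (L t f) ≤ nw f)
    (T₀ σ K : ℝ) (hT₀ : 0 < T₀) (hσ : 0 < σ) (hK : 0 ≤ K)
    (hshort : ∀ t ∈ Set.Icc (0 : ℝ) T₀, ∀ f : E,
      nn (L t f) ≤ 3 * Real.exp (-σ * t) * nn f + K * nw f)
    (hT₀c : ∀ f : E, nn (L T₀ f) ≤ Real.exp (-σ * T₀) * nn f + K * nw f) :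
    ∀ t : ℝ, 0 ≤ t → ∀ f : E,
      nn (L t f) ≤ 3 * Real.exp (-σ * t) * nn f
        + (4 * K * (1 - Real.exp (-σ * T₀))⁻¹) * nw f := by
  have hq : 0 < 1 - Real.exp (-σ * T₀) := by simp [mul_pos hσ hT₀]
  exact fun t ht => (stmt4_general hnw0 hLadd hLw hT₀ hσ hK hshort hT₀c ht).mono_weak hnw0
    (by gcongr; linarith)
end

section
/- Let V be a complex vector space equipped with two norms ‖·‖ and ‖·‖_w satisfying ‖f‖_w ≤ ‖f‖ for all f ∈ V, and let Q : V → V be a linear map. Let a, σ > 0 and B ≥ 0 be constants such that ‖Q f‖ ≤ a^{−1} ‖f‖ for all f, and ‖Q^m f‖ ≤ 3 (a+σ)^{−m} ‖f‖ + B a^{−m} ‖f‖_w for all integers m ≥ 1 and all f ∈ V. Assume that the image {Q f : ‖f‖ ≤ 1} of the unit ball is totally bounded with respect to ‖·‖_w. Then, with C := (6+B)(a+σ)/a, for every integer n ≥ 1 there exists a finite set F ⊆ V such that Q^n({f ∈ V : ‖f‖ ≤ 1}) ⊆ ⋃_{g∈F} {f ∈ V : ‖f − g‖ ≤ C (a+σ)^{−n}}.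 -/
/-! Two points of the unit ball whose images under `Q` lie in the same `‖·‖_w`-ball of radius `ε`
satisfy `‖Q f - Q g‖_w ≤ 2 ε`, while `‖Q f - Q g‖ ≤ 2 a⁻¹` always. The two-norm inequality for
`Q ^ (n - 1)`, applied to `Q f - Q g`, then bounds `‖Q ^ n f - Q ^ n g‖`; choosing `ε` proportional
to `(a / (a + σ)) ^ (n - 1)` gives the weak-norm term the same decay as the strong-norm term. So the
images under `Q ^ (n - 1)` of one point from each of finitely many weak balls form the desired net.
-/

/-- The set `S` admits a finite `r`-net for the seminorm `p`: it is covered by finitely many closed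
`p`-balls of radius `r`, whose centers need not lie in `S`. It expresses both the compactness
assumption, for the weak norm, and the covering obtained from it, for the strong norm. -/
def HasFiniteCover {V : Type*} [AddGroup V] (p : AddGroupSeminorm V) (S : Set V) (r : ℝ) : Prop :=
  ∃ F : Finset V, ∀ f ∈ S, ∃ g ∈ F, p (f - g) ≤ r

namespace HasFiniteCover

variable {V W : Type*} [AddGroup V] [AddGroup W] {q : AddGroupSeminorm V} {S : Set V} {ε : ℝ}

theorem exists_finset_subset (hS : HasFiniteCover q S ε) :
    ∃ F : Finset V, ↑F ⊆ S ∧ ∀ f ∈ S, ∃ g ∈ F, q (f - g) ≤ 2 * ε := by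
  classical
  obtain ⟨F, hF⟩ := hS
  choose! rep rep_mem rep_near using
    fun (c : V) (hc : ∃ f ∈ S, q (f - c) ≤ ε) => hc
  refine ⟨({c ∈ F | ∃ f ∈ S, q (f - c) ≤ ε} : Finset V).image rep, fun g hg => ?_, fun f hf => ?_⟩
  · obtain ⟨c, hc, rfl⟩ := Finset.mem_image.mp hg
    exact rep_mem c (Finset.mem_filter.mp hc).2
  · obtain ⟨c, hc, hfc⟩ := hF f hf
    have hc_near : ∃ f ∈ S, q (f - c) ≤ ε := ⟨f, hf, hfc⟩
    refine ⟨rep c, Finset.mem_image_of_mem rep (Finset.mem_filter.mpr ⟨hc, hc_near⟩), ?_⟩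
    calc
      q (f - rep c) ≤ q (f - c) + q (c - rep c) := le_map_sub_add_map_sub q _ _ _
      _ = q (f - c) + q (rep c - c) := by rw [map_sub_rev q c (rep c)]
      _ ≤ 2 * ε := by linarith [rep_near c hc_near]

theorem image_of_two_norm_bound {p : AddGroupSeminorm V} {p' : AddGroupSeminorm W} {T : V → W}
    {α β D : ℝ} (hS : HasFiniteCover q S ε) (hα : 0 ≤ α) (hβ : 0 ≤ β)
    (hD : ∀ f ∈ S, ∀ g ∈ S, p (f - g) ≤ D)
    (hT : ∀ f ∈ S, ∀ g ∈ S, p' (T f - T g) ≤ α * p (f - g) + β * q (f - g)) :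
    HasFiniteCover p' (T '' S) (α * D + β * (2 * ε)) := by
  classical
  obtain ⟨F, hFS, hF⟩ := hS.exists_finset_subset
  refine ⟨F.image T, Set.forall_mem_image.mpr fun f hf => ?_⟩
  obtain ⟨g, hg, hfg⟩ := hF f hf
  refine ⟨T g, Finset.mem_image_of_mem T hg, ?_⟩
  calc
    p' (T f - T g) ≤ α * p (f - g) + β * q (f - g) := hT f hf g (hFS hg)
    _ ≤ α * D + β * (2 * ε) := by gcongr; exact hD f hf g (hFS hg)

end HasFiniteCover

theorem map_sub_le_of_mem_image_unitBall {V W : Type*} [AddGroup V] [AddGroup W]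
    {p : AddGroupSeminorm V} {p' : AddGroupSeminorm W} {T : V → W} {K : ℝ} (hK : 0 ≤ K)
    (hT : ∀ f, p' (T f) ≤ K * p f) {x y : W} (hx : x ∈ T '' {f | p f ≤ 1})
    (hy : y ∈ T '' {f | p f ≤ 1}) : p' (x - y) ≤ 2 * K := by
  have image_bound : ∀ z ∈ T '' {f | p f ≤ 1}, p' z ≤ K := Set.forall_mem_image.mpr fun f hf =>
    (hT f).trans (mul_le_of_le_one_right hK hf)
  linarith [map_sub_le_add p' x y, image_bound x hx, image_bound y hy]

section Iterate

variable {V E : Type*} [AddGroup V] [FunLike E V V] [AddMonoidHomClass E V V]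
  (p q : AddGroupSeminorm V) (Q : E)

theorem hasFiniteCover_iterate_succ_image_unitBall {m : ℕ} {K α β ε : ℝ} (hK : 0 ≤ K)
    (hα : 0 ≤ α) (hβ : 0 ≤ β) (hQ : ∀ f, p (Q f) ≤ K * p f)
    (hQm : ∀ f, p (Q^[m] f) ≤ α * p f + β * q f)
    (hcover : HasFiniteCover q (Q '' {f | p f ≤ 1}) ε) :
    HasFiniteCover p (Q^[m + 1] '' {f | p f ≤ 1}) (α * (2 * K) + β * (2 * ε)) := by
  rw [Function.iterate_succ, Set.image_comp]
  refine hcover.image_of_two_norm_bound hα hβ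
    (fun f hf g hg => map_sub_le_of_mem_image_unitBall hK hQ hf hg) fun f _ g _ => ?_
  rw [← iterate_map_sub]
  exact hQm (f - g)

theorem stmt5_general {a s B : ℝ} (ha : 0 < a) (hs : 0 < s) (hB : 0 ≤ B)
    (hQ : ∀ f, p (Q f) ≤ a⁻¹ * p f)
    (hQm : ∀ m : ℕ, 1 ≤ m → ∀ f, p (Q^[m] f) ≤ 3 * (s ^ m)⁻¹ * p f + B * (a ^ m)⁻¹ * q f)
    (htb : ∀ ε : ℝ, 0 < ε → HasFiniteCover q (Q '' {f | p f ≤ 1}) ε) (n : ℕ) (hn : 1 ≤ n) :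
    HasFiniteCover p (Q^[n] '' {f | p f ≤ 1}) ((6 + B) * s / a * (s ^ n)⁻¹) := by
  obtain ⟨m, rfl⟩ := Nat.exists_eq_add_of_le' hn
  have two_norm (f : V) : p (Q^[m] f) ≤ 3 * (s ^ m)⁻¹ * p f + B * (a ^ m)⁻¹ * q f := by
    rcases m.eq_zero_or_pos with rfl | hm
    · simp only [Function.iterate_zero, id_eq, pow_zero, inv_one, mul_one]
      linarith [apply_nonneg p f, mul_nonneg hB (apply_nonneg q f)]
    · exact hQm m hm f
  -- This `ε` solves `(a ^ m)⁻¹ * (2 * ε) = a⁻¹ * (s ^ m)⁻¹`.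
  have hcover := htb (a ^ m * (s ^ m)⁻¹ * a⁻¹ / 2) (by positivity)
  convert hasFiniteCover_iterate_succ_image_unitBall p q Q (by positivity) (by positivity)
    (by positivity) hQ two_norm hcover using 1
  field_simp
  ring

end Iterate

/-- The Hennion–Nussbaum covering argument of Proposition 2.9: if `Q` satisfies a
two-norm resolvent inequality and maps the strong unit ball to a `‖·‖_w`-totally
bounded set, then the images of the unit ball under the powers `Q^n` can be
covered by finitely many strong-norm balls of radius `C (a+σ)^{-n}` with
`C = (6+B)(a+σ)/a`. -/
theorem stmt5 {V : Type*} [AddCommGroup V] [Module ℂ V]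
    (nn nw : V → ℝ)
    (hnn0 : ∀ f : V, 0 ≤ nn f)
    (hnnadd : ∀ f g : V, nn (f + g) ≤ nn f + nn g)
    (hnnsmul : ∀ (c : ℂ) (f : V), nn (c • f) = ‖c‖ * nn f)
    (hnw0 : ∀ f : V, 0 ≤ nw f)
    (hnwadd : ∀ f g : V, nw (f + g) ≤ nw f + nw g)
    (hnwsmul : ∀ (c : ℂ) (f : V), nw (c • f) = ‖c‖ * nw f)
    (hle : ∀ f : V, nw f ≤ nn f)
    (Q : V →ₗ[ℂ] V)
    (a σ B : ℝ) (ha : 0 < a) (hσ : 0 < σ) (hB : 0 ≤ B)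
    (hQ1 : ∀ f : V, nn (Q f) ≤ a⁻¹ * nn f)
    (hQm : ∀ m : ℕ, 1 ≤ m → ∀ f : V,
      nn ((Q ^ m) f) ≤ 3 * ((a + σ) ^ m)⁻¹ * nn f + B * (a ^ m)⁻¹ * nw f)
    (htb : ∀ ε : ℝ, 0 < ε → ∃ F : Finset V,
      ∀ f : V, nn f ≤ 1 → ∃ g ∈ F, nw (Q f - g) ≤ ε) :
    ∀ n : ℕ, 1 ≤ n → ∃ F : Finset V,
      ∀ f : V, nn f ≤ 1 → ∃ g ∈ F,
        nn ((Q ^ n) f - g) ≤ (6 + B) * (a + σ) / a * ((a + σ) ^ n)⁻¹ := by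
  simp_rw [Module.End.pow_apply] at hQm ⊢
  intro n hn
  obtain ⟨F, hF⟩ := stmt5_general (Seminorm.of nn hnnadd hnnsmul).toAddGroupSeminorm
    (Seminorm.of nw hnwadd hnwsmul).toAddGroupSeminorm Q ha (add_pos ha hσ) hB hQ1 hQm
    (fun ε hε => (htb ε hε).imp fun _ hF => Set.forall_mem_image.mpr hF) n hn
  exact ⟨F, fun _ hf => hF _ (Set.mem_image_of_mem _ hf)⟩
end

section
/- Let E be a complex Banach space, D ⊆ E a linear subspace, X : D → E a linear map, z ∈ ℂ with z ≠ 0, and R : E → E a bounded linear operator such that R(z g − X g) = g for every g ∈ D. Then for every f ∈ D with X f ∈ D one has ‖R f − z^{−1} f − z^{−2} X f‖ ≤ |z|^{−2} ‖R‖ ‖X(X f)‖, where ‖R‖ denotes the operator norm of R. -/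
section Algebra

variable {𝕜 E : Type*} [DivisionRing 𝕜] [AddCommGroup E] [Module 𝕜 E]
  {z : 𝕜} {R : E →ₗ[𝕜] E} {f g h : E}

theorem resolvent_apply_eq_inv_smul_add (hz : z ≠ 0) (hf : R (z • f - g) = f) :
    R f = z⁻¹ • (f + R g) := by
  rw [eq_inv_smul_iff₀ hz, ← sub_eq_iff_eq_add, ← map_smul, ← map_sub, hf]

theorem resolvent_apply_eq_second_order (hz : z ≠ 0) (hf : R (z • f - g) = f)
    (hg : R (z • g - h) = g) :
    R f = z⁻¹ • f + (z ^ 2)⁻¹ • g + (z ^ 2)⁻¹ • R h := by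
  calc
    R f = z⁻¹ • (f + R g) := resolvent_apply_eq_inv_smul_add hz hf
    _ = z⁻¹ • (f + z⁻¹ • (g + R h)) := by rw [resolvent_apply_eq_inv_smul_add hz hg]
    _ = z⁻¹ • f + (z ^ 2)⁻¹ • g + (z ^ 2)⁻¹ • R h := by
      simp only [smul_add, smul_smul, sq, mul_inv_rev, add_assoc]

end Algebra

theorem stmt6_general {𝕜 E : Type*} [NontriviallyNormedField 𝕜] [SeminormedAddCommGroup E]
    [NormedSpace 𝕜 E] (D : Set E) (X : D → E) (z : 𝕜) (hz : z ≠ 0) (R : E →L[𝕜] E)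
    (hR : ∀ g : D, R (z • (g : E) - X g) = g) (f : D) (hf : X f ∈ D) :
    ‖R f - z⁻¹ • (f : E) - (z ^ 2)⁻¹ • X f‖ ≤ (‖z‖ ^ 2)⁻¹ * ‖R‖ * ‖X ⟨X f, hf⟩‖ := by
  have expansion : R f = z⁻¹ • (f : E) + (z ^ 2)⁻¹ • X f + (z ^ 2)⁻¹ • R (X ⟨X f, hf⟩) :=
    resolvent_apply_eq_second_order (R := R.toLinearMap) hz (hR f) (hR ⟨X f, hf⟩)
  calc
    ‖R f - z⁻¹ • (f : E) - (z ^ 2)⁻¹ • X f‖ = ‖(z ^ 2)⁻¹ • R (X ⟨X f, hf⟩)‖ := by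
      rw [expansion, sub_sub, add_sub_cancel_left]
    _ = (‖z‖ ^ 2)⁻¹ * ‖R (X ⟨X f, hf⟩)‖ := by rw [norm_smul, norm_inv, norm_pow]
    _ ≤ (‖z‖ ^ 2)⁻¹ * (‖R‖ * ‖X ⟨X f, hf⟩‖) := by
      gcongr
      exact R.le_opNorm _
    _ = (‖z‖ ^ 2)⁻¹ * ‖R‖ * ‖X ⟨X f, hf⟩‖ := (mul_assoc _ _ _).symm

/-- Lemma 2.12: if `R` is a bounded operator with `R (z g - X g) = g` for every
`g` in the domain `D` of the (abstract) generator `X`, then for `f ∈ D` with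
`X f ∈ D` one has `‖R f - z⁻¹ f - z⁻² X f‖ ≤ |z|⁻² ‖R‖ ‖X² f‖`. -/
theorem stmt6 {E : Type*} [NormedAddCommGroup E] [NormedSpace ℂ E]
    (D : Submodule ℂ E) (X : D →ₗ[ℂ] E)
    (z : ℂ) (hz : z ≠ 0)
    (R : E →L[ℂ] E)
    (hR : ∀ g : D, R (z • (g : E) - X g) = (g : E))
    (f : D) (hf : X f ∈ D) :
    ‖R (f : E) - z⁻¹ • (f : E) - (z ^ 2)⁻¹ • X f‖ ≤
      (‖z‖ ^ 2)⁻¹ * ‖R‖ * ‖X (⟨X f, hf⟩ : D)‖ :=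
  stmt6_general (D : Set E) X z hz R hR f hf
end
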